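/- arXiv:1402.2371 — 3 statements merged into one kernel-verified Lean document; each statement's English description precedes it below -/
import Mathlib

section
/- Let X ⊆ ℙⁿ(ℝ) be an irreducible nondegenerate real projective variety whose real points are Zariski dense. Let r₀ be the minimum typical rank with respect to X and let r_gen be the generic rank with respect to the complexification X_ℂ = X ⊗ ℂ. Then r₀ = r_gen. -/
/-!
Call `r` dense if the sums of `r` points of the cone are Zariski dense in affine space.

* A Zariski dense set meets every nonempty Zariski open set, and a nonempty Euclidean-open set of
  real vectors is Zariski dense in `ℂ^{n+1}`. Hence a typical rank is at least the generic rank.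
* The generic rank is dense over `ℂ`. Since the real points are dense in `X_ℂ`, replacing the
  summands one at a time shows that it is dense over `ℝ` (`sumsDense_real_of_complex`).
* The smallest dense `k` over `ℝ` is a typical rank (`isTypicalRank_of_minimal`): real sums of `k`
  points contain an open set, and sums of fewer points lie on a proper hypersurface. Hence the
  minimum typical rank is at most the generic rank.

The substantial input is `exists_open_subset_image`: if a polynomial map `f` sends a real algebraic
set `Y` onto a Zariski dense set, then `f(Y)` contains a Euclidean-open set. For this, take a
minimal prime `P` over the ideal of `Y` that still meets the polynomials in `f` trivially, let `A`
be the quotient by `P`, and extend the components of `f` to a transcendence basis `S` of `A`.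
By the primitive element theorem there is `θ ∈ A`, with minimal equation `m(S, θ) = 0`, such that
the coordinates are `x_i = q_i(S, θ) / d(S)`. At a real point of `Y` where `∂m/∂θ` does not vanish,
`m(t, ·)` changes sign, so it has a real root `u` for every nearby `t`; the point with coordinates
`q_i(t, u) / d(t)` satisfies every polynomial relation that holds in `A`. It therefore lies in `Y`,
and its image under `f` is the corresponding part of `t`.
-/

open MvPolynomial

/-- The zero locus in affine space `σ → F` of a set `I` of polynomials. -/
def zLocus {F : Type*} [CommSemiring F] {σ : Type*} (I : Set (MvPolynomial σ F)) :
    Set (σ → F) :=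
  {x | ∀ p ∈ I, eval x p = 0}

/-- A subset of affine space is Zariski closed if it is the zero locus of a set of
polynomials. -/
def IsZClosed {F : Type*} [CommSemiring F] {σ : Type*} (S : Set (σ → F)) : Prop :=
  ∃ I : Set (MvPolynomial σ F), S = zLocus I

/-- Zariski open subsets of affine space. -/
def IsZOpen {F : Type*} [CommSemiring F] {σ : Type*} (S : Set (σ → F)) : Prop :=
  IsZClosed Sᶜ

/-- Zariski dense subsets of affine space. -/
def IsZDense {F : Type*} [CommSemiring F] {σ : Type*} (S : Set (σ → F)) : Prop :=
  ∀ C : Set (σ → F), IsZClosed C → S ⊆ C → C = Set.univ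

/-- Irreducibility with respect to the Zariski topology. -/
def IsZIrreducible {F : Type*} [CommSemiring F] {σ : Type*} (S : Set (σ → F)) : Prop :=
  S.Nonempty ∧ ∀ C₁ C₂ : Set (σ → F), IsZClosed C₁ → IsZClosed C₂ →
    S ⊆ C₁ ∪ C₂ → (S ⊆ C₁ ∨ S ⊆ C₂)

/-- An affine cone: a subset closed under scalar multiplication. -/
def IsCone {F : Type*} [CommSemiring F] {σ : Type*} (S : Set (σ → F)) : Prop :=
  ∀ (c : F), ∀ x ∈ S, c • x ∈ S

/-- The set of vectors expressible as a sum of exactly `r` elements of `S`. -/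
def sumsOf {F : Type*} [CommSemiring F] {σ : Type*} (S : Set (σ → F)) (r : ℕ) :
    Set (σ → F) :=
  {v | ∃ f : Fin r → (σ → F), (∀ i, f i ∈ S) ∧ ∑ i, f i = v}

/-- The `X`-rank of a vector with respect to the affine cone `S`: the least number of
elements of `S` summing to it (`⊤` if there is no such decomposition). -/
noncomputable def xRank {F : Type*} [CommSemiring F] {σ : Type*} (S : Set (σ → F))
    (v : σ → F) : ℕ∞ :=
  sInf {r : ℕ∞ | ∃ s : ℕ, r = s ∧ v ∈ sumsOf S s}

/-- The Zariski closure of a subset of affine space. -/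
def zClosure {F : Type*} [CommSemiring F] {σ : Type*} (S : Set (σ → F)) : Set (σ → F) :=
  ⋂₀ {C : Set (σ → F) | IsZClosed C ∧ S ⊆ C}

/-- The (affine cone over the) `r`-th secant variety: the Zariski closure of the set of
points of `X`-rank at most `r`. -/
noncomputable def secantCone {F : Type*} [CommSemiring F] {σ : Type*}
    (Xhat : Set (σ → F)) (r : ℕ) : Set (σ → F) :=
  zClosure {v | xRank Xhat v ≤ (r : ℕ∞)}

/-- `r` is a typical rank with respect to the real cone `Xhat` if the set of vectors of
`X`-rank exactly `r` contains a nonempty Euclidean-open subset of `ℝ^{n+1}`. -/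
def IsTypicalRank {n : ℕ} (Xhat : Set (Fin (n + 1) → ℝ)) (r : ℕ) : Prop :=
  ∃ U : Set (Fin (n + 1) → ℝ), IsOpen U ∧ U.Nonempty ∧ ∀ v ∈ U, xRank Xhat v = (r : ℕ∞)

/-! ### Primitive elements and clearing of denominators -/

/-- The primitive element theorem for an algebraic extension of domains, with denominators cleared:
a common `θ ∈ A` expresses all `x i` as `q i (θ) / d`, the polynomial `m` is a simple-root equation
for `θ`, and every equation satisfied by `θ` becomes a multiple of `m` after scaling by a
nonzero element of `B`. -/
theorem exists_primitive_data {B A ι : Type*} [CommRing B] [CommRing A] [IsDomain B] [IsDomain A]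
    [CharZero B] [Algebra B A] [FaithfulSMul B A] [Algebra.IsAlgebraic B A] [Fintype ι]
    (x : ι → A) :
    ∃ (θ : A) (m : Polynomial B) (d : B) (q : ι → Polynomial B), d ≠ 0 ∧
      Polynomial.aeval θ m = 0 ∧ Polynomial.aeval θ (Polynomial.derivative m) ≠ 0 ∧
      (∀ i, Polynomial.aeval θ (q i) = algebraMap B A d * x i) ∧
      ∀ g : Polynomial B, Polynomial.aeval θ g = 0 → ∃ c : B, c ≠ 0 ∧ m ∣ Polynomial.C c * g := by
  classical
  let k := FractionRing B
  let K := FractionRing A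
  let _ : Algebra k K := FractionRing.liftAlgebra B K
  have : Algebra.IsAlgebraic k K := inferInstance
  have : CharZero k := charZero_of_injective_algebraMap (IsFractionRing.injective B k)
  have hBk : Function.Injective (algebraMap B k) := IsFractionRing.injective B k
  have hAK : Function.Injective (algebraMap A K) := IsFractionRing.injective A K
  let E := IntermediateField.adjoin k (Set.range fun i => algebraMap A K (x i))
  have : FiniteDimensional k E :=
    IntermediateField.finiteDimensional_adjoin fun y _ => (Algebra.IsIntegral.isIntegral y)
  obtain ⟨α, hα⟩ := Field.exists_primitive_element k E
  -- polynomials over `k` expressing the generators through the primitive element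
  have hQ : ∀ i, ∃ Q : Polynomial k, Polynomial.aeval (α : K) Q = algebraMap A K (x i) := by
    intro i
    have hxi : algebraMap A K (x i) ∈ E := IntermediateField.subset_adjoin _ _ ⟨i, rfl⟩
    have h1 : (⟨algebraMap A K (x i), hxi⟩ : E) ∈ IntermediateField.adjoin k {α} := by
      rw [hα]; trivial
    rw [← IntermediateField.mem_toSubalgebra,
      IntermediateField.adjoin_simple_toSubalgebra_of_isAlgebraic
        (Algebra.IsAlgebraic.isAlgebraic α), Algebra.adjoin_singleton_eq_range_aeval] at h1
    obtain ⟨Q, hQ⟩ := h1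
    refine ⟨Q, ?_⟩
    have := congrArg (algebraMap E K) hQ
    simpa [← Polynomial.aeval_algebraMap_apply] using this
  choose Q hQ using hQ
  -- a nonzero multiple of the primitive element lies in `A`
  obtain ⟨a, b, hb, hab⟩ := IsFractionRing.div_surjective (A := A) (α : K)
  obtain ⟨c, hc0, b', hb'⟩ :=
    (Algebra.IsAlgebraic.isAlgebraic (R := B) b).exists_nonzero_dvd hb
  have hb0 : algebraMap A K b ≠ 0 := by
    simpa using nonZeroDivisors.ne_zero hb
  let ck : k := algebraMap B k c
  have hck : ck ≠ 0 := by simpa [ck] using hc0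
  have hckK : algebraMap k K ck = algebraMap A K (b * b') := by
    rw [← hb', ← IsScalarTower.algebraMap_apply B k K, ← IsScalarTower.algebraMap_apply B A K]
  have hckK0 : algebraMap k K ck ≠ 0 := by simpa using hck
  obtain ⟨θ, hθ⟩ : ∃ θ : A, algebraMap A K θ = algebraMap k K ck * α := by
    refine ⟨a * b', ?_⟩
    rw [hckK, ← hab, mul_div_assoc', eq_div_iff hb0, map_mul, map_mul]
    ring
  have hαθ : (algebraMap k K ck⁻¹) * algebraMap A K θ = α := by
    rw [hθ, ← mul_assoc, ← map_mul, inv_mul_cancel₀ hck, map_one, one_mul]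
  let Q' : ι → Polynomial k := fun i => (Q i).comp (Polynomial.C ck⁻¹ * Polynomial.X)
  have hQ' : ∀ i, Polynomial.aeval (algebraMap A K θ) (Q' i) = algebraMap A K (x i) := by
    intro i
    simp only [Q', Polynomial.aeval_comp, map_mul, Polynomial.aeval_C, Polynomial.aeval_X]
    rw [hαθ, hQ]
  -- evaluation at `θ` in `A` and in `K`
  have hev : ∀ g : Polynomial B, algebraMap A K (Polynomial.aeval θ g) =
      Polynomial.aeval (algebraMap A K θ) (g.map (algebraMap B k)) := by
    intro g
    rw [Polynomial.aeval_map_algebraMap, Polynomial.aeval_algebraMap_apply]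
  have hnorm : ∀ P : Polynomial k, ∃ (p : Polynomial B) (e : B), e ≠ 0 ∧
      p.map (algebraMap B k) = Polynomial.C (algebraMap B k e) * P := by
    intro P
    obtain ⟨e, he, h⟩ := IsLocalization.integerNormalization_spec (nonZeroDivisors B) P
    refine ⟨_, e, nonZeroDivisors.ne_zero he, h.trans ?_⟩
    rw [← Polynomial.smul_eq_C_mul, algebraMap_smul]
  choose qn en hen hqn using fun i => hnorm (Q' i)
  have hint : IsIntegral k (algebraMap A K θ) := Algebra.IsIntegral.isIntegral _
  obtain ⟨m, e, he, hm⟩ := hnorm (minpoly k (algebraMap A K θ))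
  have hek : algebraMap B k e ≠ 0 := by simpa using he
  have hdvd : ∀ i, en i ∣ ∏ j, en j := fun i => Finset.dvd_prod_of_mem _ (Finset.mem_univ i)
  choose w hw using hdvd
  refine ⟨θ, m, ∏ j, en j, fun i => Polynomial.C (w i) * qn i,
    Finset.prod_ne_zero_iff.2 fun i _ => hen i, ?_, ?_, ?_, ?_⟩
  · apply hAK
    rw [hev, hm, map_mul, minpoly.aeval, mul_zero, map_zero]
  · intro h
    have h2 := hev (Polynomial.derivative m)
    rw [h, map_zero, ← Polynomial.derivative_map, hm, Polynomial.derivative_C_mul, map_mul,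
      Polynomial.aeval_C] at h2
    have hsep := (minpoly.irreducible hint).separable
    refine (mul_ne_zero ?_ (hsep.aeval_derivative_ne_zero (minpoly.aeval k _))) h2.symm
    simpa using he
  · intro i
    apply hAK
    rw [hev, Polynomial.map_mul, hqn, map_mul, map_mul, hQ', hw i]
    simp only [Polynomial.map_C, Polynomial.aeval_C, map_mul,
      ← IsScalarTower.algebraMap_apply B k K, ← IsScalarTower.algebraMap_apply B A K]
    ring
  · intro g hg
    have h1 := hev g
    rw [hg, map_zero] at h1
    obtain ⟨H, hH⟩ := minpoly.dvd k _ h1.symm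
    obtain ⟨h, f, hf, hh⟩ := hnorm H
    refine ⟨e * f, mul_ne_zero he hf, h, ?_⟩
    apply Polynomial.map_injective _ hBk
    rw [Polynomial.map_mul, Polynomial.map_mul, hm, hh, hH]
    simp only [Polynomial.map_C, map_mul, Polynomial.map_mul]
    ring

/-- Clearing denominators in `p(q(θ) / d)`: the same polynomial `g` computes `d ^ e * p(x)` in `A`
and `d(t) ^ e * p(q(t, u) / d(t))` at real values of the parameters. -/
theorem homogenize {S ι A : Type*} [CommRing A] [Algebra ℝ A] [Algebra (MvPolynomial S ℝ) A]
    [IsScalarTower ℝ (MvPolynomial S ℝ) A] (x : ι → A) (θ : A) (d : MvPolynomial S ℝ)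
    (q : ι → Polynomial (MvPolynomial S ℝ))
    (hq : ∀ i, Polynomial.aeval θ (q i) = algebraMap (MvPolynomial S ℝ) A d * x i)
    (p : MvPolynomial ι ℝ) :
    ∃ (e : ℕ) (g : Polynomial (MvPolynomial S ℝ)),
      Polynomial.aeval θ g = algebraMap (MvPolynomial S ℝ) A d ^ e * aeval x p ∧
      ∀ (t : S → ℝ) (u : ℝ), eval t d ≠ 0 → Polynomial.eval₂ (eval t) u g =
        eval t d ^ e * eval (fun i => Polynomial.eval₂ (eval t) u (q i) / eval t d) p := by
  induction p using MvPolynomial.induction_on with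
  | C a =>
    refine ⟨0, Polynomial.C (C a), ?_, ?_⟩
    · rw [Polynomial.aeval_C, ← MvPolynomial.algebraMap_eq,
        ← IsScalarTower.algebraMap_apply ℝ (MvPolynomial S ℝ) A]
      simp
    · intro t u _
      simp
  | add p₁ p₂ h₁ h₂ =>
    obtain ⟨e₁, g₁, ha₁, hb₁⟩ := h₁
    obtain ⟨e₂, g₂, ha₂, hb₂⟩ := h₂
    refine ⟨e₁ + e₂, Polynomial.C (d ^ e₂) * g₁ + Polynomial.C (d ^ e₁) * g₂, ?_, ?_⟩
    · simp only [map_add, map_mul, ha₁, ha₂, Polynomial.aeval_C, map_pow]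
      ring
    · intro t u hd
      simp only [Polynomial.eval₂_add, Polynomial.eval₂_mul, hb₁ t u hd, hb₂ t u hd,
        Polynomial.eval₂_C, eval_pow, eval_add]
      ring
  | mul_X p i h =>
    obtain ⟨e, g, ha, hb⟩ := h
    refine ⟨e + 1, g * q i, ?_, ?_⟩
    · simp only [map_mul, ha, hq, aeval_X]
      ring
    · intro t u hd
      simp only [Polynomial.eval₂_mul, hb t u hd, map_mul, eval_X]
      rw [pow_succ, mul_assoc, mul_assoc, mul_left_comm (eval t d), mul_div_cancel₀ _ hd]

/-! ### Real roots and real points -/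

/-- A simple real root persists under small changes of the parameters, because the polynomial
changes sign. -/
theorem eventually_exists_root {S : Type*} (m : Polynomial (MvPolynomial S ℝ)) (t₀ : S → ℝ)
    (u₀ : ℝ) (h0 : Polynomial.eval₂ (eval t₀) u₀ m = 0)
    (h1 : Polynomial.eval₂ (eval t₀) u₀ (Polynomial.derivative m) ≠ 0) :
    ∀ᶠ t in nhds t₀, ∃ u : ℝ, Polynomial.eval₂ (eval t) u m = 0 := by
  have hcont : ∀ u : ℝ, Continuous fun t : S → ℝ => Polynomial.eval₂ (eval t) u m := by
    intro u
    simp only [Polynomial.eval₂_eq_sum_range]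
    exact continuous_finsetSum _ fun i _ => (MvPolynomial.continuous_eval _).mul continuous_const
  set p := m.map (eval t₀) with hp
  have hd : HasDerivAt (fun u => p.eval u) (p.derivative.eval u₀) u₀ := p.hasDerivAt u₀
  rw [← Polynomial.eval_map, ← hp] at h0
  rw [← Polynomial.eval_map, ← Polynomial.derivative_map, ← hp] at h1
  -- otherwise `u₀` would be an extremum of `p`, where the derivative vanishes
  obtain ⟨a, ha⟩ : ∃ a, p.eval a < 0 := by
    by_contra! hcon
    refine h1 (IsLocalMin.hasDerivAt_eq_zero (Filter.Eventually.of_forall fun u => ?_) hd)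
    simpa [h0] using hcon u
  obtain ⟨b, hb⟩ : ∃ b, 0 < p.eval b := by
    by_contra! hcon
    refine h1 (IsLocalMax.hasDerivAt_eq_zero (Filter.Eventually.of_forall fun u => ?_) hd)
    simpa [h0] using hcon u
  rw [hp, Polynomial.eval_map] at ha hb
  filter_upwards [(hcont a).continuousAt.eventually_lt continuousAt_const ha,
    continuousAt_const.eventually_lt (hcont b).continuousAt hb] with t hta htb
  have hct : Continuous fun u => (m.map (eval t)).eval u := (m.map (eval t)).continuous
  simp only [Polynomial.eval_map] at hct
  exact mem_range_of_exists_le_of_exists_ge hct ⟨a, hta.le⟩ ⟨b, htb.le⟩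

/-- Let `A` be algebraic over the polynomial ring in `S`. Near the parameter values of any real
point `ev` of `A` off the hypersurface `h = 0`, every `t : S → ℝ` comes from a real point `y`
satisfying the finitely many relations `G` among the `x i`, at which `f a` takes the value prescribed
by `t` whenever `f a` represents a variable of `S`. -/
theorem exists_open_parametrization {S ι τ A : Type*} [CommRing A] [IsDomain A] [Algebra ℝ A]
    [Algebra (MvPolynomial S ℝ) A] [IsScalarTower ℝ (MvPolynomial S ℝ) A]
    [FaithfulSMul (MvPolynomial S ℝ) A] [Algebra.IsAlgebraic (MvPolynomial S ℝ) A]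
    [Fintype ι] [Fintype τ] (x : ι → A)
    (G : Finset (MvPolynomial ι ℝ)) (hG : ∀ p ∈ G, aeval x p = 0)
    (f : τ → MvPolynomial ι ℝ) (j : τ → S)
    (hf : ∀ a, aeval x (f a) = algebraMap (MvPolynomial S ℝ) A (X (j a))) :
    ∃ h : A, h ≠ 0 ∧ ∀ ev : A →ₐ[ℝ] ℝ, ev h ≠ 0 →
      ∀ᶠ t in nhds (fun s : S => ev (algebraMap (MvPolynomial S ℝ) A (X s))),
        ∃ y : ι → ℝ, (∀ p ∈ G, eval y p = 0) ∧ ∀ a, eval y (f a) = t (j a) := by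
  classical
  obtain ⟨θ, m, d, q, hd, hm, hm', hq, hrel⟩ :=
    exists_primitive_data (B := MvPolynomial S ℝ) x
  choose e g hg hge using homogenize x θ d q hq
  -- one nonzero `c` serves finitely many relations at once
  have hcommon : ∀ F : Finset (Polynomial (MvPolynomial S ℝ)),
      (∀ r ∈ F, Polynomial.aeval θ r = 0) →
      ∃ c : MvPolynomial S ℝ, c ≠ 0 ∧ ∀ r ∈ F, m ∣ Polynomial.C c * r := by
    intro F
    induction F using Finset.induction_on with
    | empty => exact fun _ => ⟨1, one_ne_zero, by simp⟩
    | insert r F _ ih =>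
      intro hF
      obtain ⟨c, hc, hcF⟩ := ih fun r' hr' => hF r' (Finset.mem_insert_of_mem hr')
      obtain ⟨c', hc', hcr⟩ := hrel r (hF r (Finset.mem_insert_self _ _))
      refine ⟨c * c', mul_ne_zero hc hc', fun r' hr' => ?_⟩
      rw [Polynomial.C_mul]
      rcases Finset.mem_insert.1 hr' with rfl | hr'
      · rw [mul_assoc]; exact hcr.mul_left _
      · rw [mul_right_comm]; exact (hcF r' hr').mul_right _
  obtain ⟨c, hc, hcF⟩ := hcommon (G.image g ∪ Finset.univ.image fun a =>
      g (f a) - Polynomial.C (d ^ e (f a) * X (j a))) (by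
    intro r hr
    rcases Finset.mem_union.1 hr with hr | hr
    · obtain ⟨p, hp, rfl⟩ := Finset.mem_image.1 hr
      rw [hg, hG p hp, mul_zero]
    · obtain ⟨a, _, rfl⟩ := Finset.mem_image.1 hr
      rw [map_sub, hg, hf, Polynomial.aeval_C, map_mul, map_pow, sub_self])
  have hinj := FaithfulSMul.algebraMap_injective (MvPolynomial S ℝ) A
  refine ⟨algebraMap (MvPolynomial S ℝ) A (c * d) *
    Polynomial.aeval θ (Polynomial.derivative m), mul_ne_zero ?_ hm', ?_⟩
  · rw [Ne, map_eq_zero_iff _ hinj]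
    exact mul_ne_zero hc hd
  intro ev hev
  set t₀ : S → ℝ := fun s => ev (algebraMap (MvPolynomial S ℝ) A (X s)) with ht₀
  have hcomp : (ev : A →+* ℝ).comp (algebraMap (MvPolynomial S ℝ) A) = eval t₀ := by
    apply MvPolynomial.ringHom_ext
    · intro r
      rw [RingHom.comp_apply, ← MvPolynomial.algebraMap_eq,
        ← IsScalarTower.algebraMap_apply ℝ (MvPolynomial S ℝ) A]
      simp
    · intro s
      simp [ht₀]
  have hB : ∀ b, ev (algebraMap (MvPolynomial S ℝ) A b) = eval t₀ b := fun b => by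
    rw [← hcomp]; rfl
  have hpoly : ∀ r : Polynomial (MvPolynomial S ℝ),
      ev (Polynomial.aeval θ r) = Polynomial.eval₂ (eval t₀) (ev θ) r := by
    intro r
    rw [← hcomp, Polynomial.aeval_def]
    exact Polynomial.hom_eval₂ r _ (ev : A →+* ℝ) θ
  rw [map_mul, hB, hpoly] at hev
  have hroot := eventually_exists_root m t₀ (ev θ) (by rw [← hpoly, hm, map_zero])
    (right_ne_zero_of_mul hev)
  have hcd : ∀ᶠ t in nhds t₀, eval t (c * d) ≠ 0 :=
    (MvPolynomial.continuous_eval (c * d)).continuousAt.eventually_ne (left_ne_zero_of_mul hev)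
  filter_upwards [hroot, hcd] with t ⟨u, hu⟩ htcd
  rw [map_mul] at htcd
  have htc := left_ne_zero_of_mul htcd
  have htd := right_ne_zero_of_mul htcd
  -- relations at `θ` specialize to relations at the real root `u`
  have hspec : ∀ r, m ∣ Polynomial.C c * r → Polynomial.eval₂ (eval t) u r = 0 := by
    rintro r ⟨w, hw⟩
    have := congrArg (Polynomial.eval₂ (eval t) u) hw
    rw [Polynomial.eval₂_mul, Polynomial.eval₂_mul, hu, zero_mul, Polynomial.eval₂_C] at this
    exact (mul_eq_zero.1 this).resolve_left htc
  refine ⟨fun i => Polynomial.eval₂ (eval t) u (q i) / eval t d, fun p hp => ?_, fun a => ?_⟩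
  · have h := hspec _ (hcF (g p) (Finset.mem_union_left _ (Finset.mem_image_of_mem _ hp)))
    rw [hge p t u htd] at h
    exact (mul_eq_zero.1 h).resolve_left (pow_ne_zero _ htd)
  · have h := hspec _ (hcF _ (Finset.mem_union_right _
      (Finset.mem_image_of_mem _ (Finset.mem_univ a))))
    rw [Polynomial.eval₂_sub, hge (f a) t u htd, Polynomial.eval₂_C, map_mul, map_pow, eval_X,
      ← mul_sub] at h
    exact sub_eq_zero.1 ((mul_eq_zero.1 h).resolve_left (pow_ne_zero _ htd))

/-- The points of `Y` on the component cut out by a minimal prime `P` are Zariski dense in that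
component. -/
theorem exists_point_of_minimalPrime {σ : Type*} [Finite σ] (Y : Set (σ → ℝ))
    (P : Ideal (MvPolynomial σ ℝ)) (hP : P ∈ (vanishingIdeal ℝ Y).minimalPrimes)
    (h : MvPolynomial σ ℝ) (hh : h ∉ P) :
    ∃ y ∈ Y, eval y h ≠ 0 ∧ ∀ p ∈ P, eval y p = 0 := by
  classical
  have hPp : P.IsPrime := hP.1.1
  have hfin := Ideal.finite_minimalPrimes_of_isNoetherianRing _ (vanishingIdeal ℝ Y)
  -- an element of all other minimal primes that avoids `P`
  obtain ⟨s, hs, hsP⟩ : ∃ s ∈ (hfin.toFinset.erase P).inf id, s ∉ P := by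
    rw [← SetLike.not_le_iff_exists, hPp.inf_le']
    rintro ⟨Q, hQ, hQP⟩
    simp only [Finset.mem_erase, Set.Finite.mem_toFinset] at hQ
    exact hQ.1 (le_antisymm hQP (hP.2 hQ.2.1 hQP))
  have hsp : ∀ p ∈ P, s * p ∈ (vanishingIdeal ℝ Y).radical := by
    intro p hp
    rw [← Ideal.sInf_minimalPrimes, Ideal.mem_sInf]
    intro Q hQ
    by_cases hQP : Q = P
    · exact hQP ▸ P.mul_mem_left _ hp
    · refine Q.mul_mem_right _ ?_
      have : (hfin.toFinset.erase P).inf id ≤ Q :=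
        Finset.inf_le (f := id) (by simpa using ⟨hQP, hQ⟩)
      exact this hs
  have hhs : h * s ∉ vanishingIdeal ℝ Y := fun hmem =>
    (hPp.mem_or_mem (hP.1.2 hmem)).elim hh hsP
  simp only [mem_vanishingIdeal_iff, not_forall] at hhs
  obtain ⟨y, hy, hne⟩ := hhs
  rw [map_mul] at hne
  refine ⟨y, hy, left_ne_zero_of_mul hne, fun p hp => ?_⟩
  obtain ⟨N, hN⟩ := hsp p hp
  have := hN y hy
  rw [map_pow, map_mul] at this
  exact (mul_eq_zero.1 (eq_zero_of_pow_eq_zero this)).resolve_left (right_ne_zero_of_mul hne)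

/-- If the image of a real algebraic set under a polynomial map is Zariski dense, then it contains
a nonempty Euclidean-open set. -/
theorem exists_open_subset_image {σ τ : Type*} [Fintype σ] [Fintype τ] (Y : Set (σ → ℝ))
    (hY : IsZClosed Y) (f : τ → MvPolynomial σ ℝ)
    (hf : ∀ g : MvPolynomial τ ℝ, (∀ y ∈ Y, eval (fun a => eval y (f a)) g = 0) → g = 0) :
    ∃ V : Set (τ → ℝ), IsOpen V ∧ V.Nonempty ∧ ∀ w ∈ V, ∃ y ∈ Y, ∀ a, eval y (f a) = w a := by
  classical
  let φ : MvPolynomial τ ℝ →ₐ[ℝ] MvPolynomial σ ℝ := aeval f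
  have hcomap : (vanishingIdeal ℝ Y).comap (φ : MvPolynomial τ ℝ →+* MvPolynomial σ ℝ) = ⊥ := by
    rw [eq_bot_iff]
    intro g hg
    refine hf g fun y hy => ?_
    have h1 : aeval y (aeval f g) = 0 := hg y hy
    have h2 : ((aeval y : MvPolynomial σ ℝ →ₐ[ℝ] ℝ).comp (aeval f)) g =
        aeval (fun a => eval y (f a)) g := by
      congr 1
      ext a
      simp
    rw [AlgHom.comp_apply, h1] at h2
    exact h2.symm
  obtain ⟨P, hP, hPφ⟩ := Ideal.exists_minimalPrimes_comap_eq (I := vanishingIdeal ℝ Y)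
    (φ : MvPolynomial τ ℝ →+* MvPolynomial σ ℝ) ⊥ (by
      rw [hcomap]
      exact ⟨⟨Ideal.isPrime_bot, le_rfl⟩, fun _ _ _ => bot_le⟩)
  have hPp : P.IsPrime := hP.1.1
  let A := MvPolynomial σ ℝ ⧸ P
  let π : MvPolynomial σ ℝ →ₐ[ℝ] A := Ideal.Quotient.mkₐ ℝ P
  have hπ : ∀ p, π p = 0 ↔ p ∈ P := fun p => Ideal.Quotient.eq_zero_iff_mem
  have hπX : (aeval fun i => π (X i) : MvPolynomial σ ℝ →ₐ[ℝ] A) = π := by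
    ext i; simp
  have hind : AlgebraicIndependent ℝ (fun a => π (f a)) := by
    have hcomp : (aeval (fun a => π (f a)) : MvPolynomial τ ℝ →ₐ[ℝ] A) = π.comp φ := by
      ext a; simp [φ]
    rw [algebraicIndependent_iff]
    intro g hg
    rw [hcomp, AlgHom.comp_apply, hπ] at hg
    have : g ∈ P.comap (φ : MvPolynomial τ ℝ →+* MvPolynomial σ ℝ) := hg
    rwa [hPφ] at this
  obtain ⟨S, hS, hbasis⟩ := exists_isTranscendenceBasis_superset hind.to_subtype_range
  let evS : MvPolynomial S ℝ →ₐ[ℝ] A := aeval (Subtype.val : S → A)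
  let _ : Algebra (MvPolynomial S ℝ) A := evS.toRingHom.toAlgebra
  have hmap : ∀ b, algebraMap (MvPolynomial S ℝ) A b = evS b := fun _ => rfl
  have : IsScalarTower ℝ (MvPolynomial S ℝ) A :=
    IsScalarTower.of_algebraMap_eq fun r => (evS.commutes r).symm
  have hinj : Function.Injective (algebraMap (MvPolynomial S ℝ) A) := hbasis.1
  have : FaithfulSMul (MvPolynomial S ℝ) A :=
    (faithfulSMul_iff_algebraMap_injective _ _).2 hinj
  have := hbasis.isAlgebraic
  have : Algebra.IsAlgebraic (MvPolynomial S ℝ) A := by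
    refine Algebra.IsAlgebraic.of_ringHom_of_comp_eq
      (S := Algebra.adjoin ℝ (Set.range (Subtype.val : S → A))) (B := A) hbasis.1.aevalEquiv (RingHom.id A)
      hbasis.1.aevalEquiv.surjective
      Function.injective_id ?_
    ext b <;> simp [hmap, evS]
  let j : τ → S := fun a => ⟨π (f a), hS ⟨a, rfl⟩⟩
  have hj : Function.Injective j := fun a b hab => hind.injective (congrArg Subtype.val hab)
  obtain ⟨G, hG⟩ : P.FG := IsNoetherian.noetherian P
  obtain ⟨h, hh0, hh⟩ := exists_open_parametrization (fun i => π (X i)) G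
    (fun p hp => by rw [hπX, hπ, ← hG]; exact Ideal.subset_span hp) f j
    (fun a => by rw [hπX, hmap]; simp [evS, j])
  obtain ⟨h', rfl⟩ := Ideal.Quotient.mkₐ_surjective ℝ P h
  obtain ⟨y, hy, hyh, hyP⟩ := exists_point_of_minimalPrime Y P hP h' fun hmem =>
    hh0 ((hπ h').2 hmem)
  let ev : A →ₐ[ℝ] ℝ := Ideal.Quotient.liftₐ P (aeval y) fun p hp => hyP p hp
  have hev : ∀ p, ev (π p) = eval y p := fun p => rfl
  have hnhds := hh ev (by rw [show (Ideal.Quotient.mkₐ ℝ P) h' = π h' from rfl, hev]; exact hyh)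
  set t₀ : S → ℝ := fun s => ev (algebraMap (MvPolynomial S ℝ) A (X s)) with ht₀
  obtain ⟨N, hN, hNo, ht₀N⟩ := eventually_nhds_iff.1 hnhds
  -- `w` is extended to all of `S` by the values of `t₀`
  have hcont : Continuous fun w : τ → ℝ => Function.extend j w t₀ := by
    refine continuous_pi fun s => ?_
    by_cases hs : ∃ a, j a = s
    · obtain ⟨a, rfl⟩ := hs
      simpa only [hj.extend_apply] using continuous_apply a
    · simpa only [Function.extend_apply' _ _ _ hs] using continuous_const
  refine ⟨(fun w : τ → ℝ => Function.extend j w t₀) ⁻¹' N, hNo.preimage hcont, ⟨t₀ ∘ j, ?_⟩, ?_⟩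
  · have : Function.extend j (t₀ ∘ j) t₀ = t₀ := by
      funext s
      by_cases hs : ∃ a, j a = s
      · obtain ⟨a, rfl⟩ := hs
        rw [hj.extend_apply]; rfl
      · rw [Function.extend_apply' _ _ _ hs]
    rw [Set.mem_preimage, this]
    exact ht₀N
  · intro w hw
    obtain ⟨z, hz, hzf⟩ := hN _ hw
    refine ⟨z, ?_, fun a => (hzf a).trans (hj.extend_apply _ _ _)⟩
    obtain ⟨I, rfl⟩ := hY
    intro p hp
    have hpP : p ∈ Ideal.span (G : Set (MvPolynomial σ ℝ)) :=
      hG ▸ hP.1.2 (show p ∈ vanishingIdeal ℝ (zLocus I) from fun y hy => hy p hp)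
    have hle : Ideal.span (G : Set (MvPolynomial σ ℝ)) ≤ RingHom.ker (eval z) :=
      Ideal.span_le.2 fun p hp => hz p hp
    exact hle hpP

/-! ### Ranks and sums of points -/

/-- A nonempty Euclidean-open set of real vectors is Zariski dense, also over an extension field
of `ℝ`. -/
theorem eq_zero_of_forall_mem_open {τ F : Type*} [Finite τ] [Field F] (c : ℝ →+* F)
    {U : Set (τ → ℝ)} (hU : IsOpen U) (hne : U.Nonempty) (g : MvPolynomial τ F)
    (hg : ∀ v ∈ U, eval (fun i => c (v i)) g = 0) : g = 0 := by
  obtain ⟨a, ha⟩ := hne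
  obtain ⟨u, hu, hsub⟩ := isOpen_pi_iff'.1 hU a ha
  refine MvPolynomial.funext_set (fun i => c '' u i) (fun i => ?_) fun x hx => ?_
  · exact (infinite_of_mem_nhds (a i) ((hu i).1.mem_nhds (hu i).2)).image c.injective.injOn
  · choose v hv hvx using fun i => hx i (Set.mem_univ i)
    rw [map_zero, ← hg v (hsub fun i _ => hv i)]
    exact congrArg (fun y => eval y g) (funext fun i => (hvx i).symm)

theorem xRank_le_of_mem {F σ : Type*} [CommSemiring F] {S : Set (σ → F)} {v : σ → F} {r : ℕ}
    (h : v ∈ sumsOf S r) : xRank S v ≤ r :=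
  sInf_le ⟨r, rfl, h⟩

theorem mem_sumsOf_of_xRank_eq {F σ : Type*} [CommSemiring F] {S : Set (σ → F)} {v : σ → F}
    {r : ℕ} (h : xRank S v = r) : v ∈ sumsOf S r := by
  have hne : {r : ℕ∞ | ∃ s : ℕ, r = s ∧ v ∈ sumsOf S s}.Nonempty := by
    by_contra hcon
    rw [Set.not_nonempty_iff_eq_empty] at hcon
    rw [xRank, hcon, sInf_empty] at h
    exact ENat.natCast_ne_top r h.symm
  obtain ⟨s, hs, hv⟩ := csInf_mem hne
  have hrs : (r : ℕ∞) = s := h.symm.trans hs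
  rwa [Nat.cast_inj.1 hrs]

/-- The set `sumsOf S r` is Zariski dense, phrased through polynomials: only `0` vanishes on it. -/
def SumsDense {F σ : Type*} [CommSemiring F] (S : Set (σ → F)) (r : ℕ) : Prop :=
  ∀ g : MvPolynomial σ F, (∀ v ∈ sumsOf S r, eval v g = 0) → g = 0

/-- The sum map on `X ^ r` is a polynomial map on a real algebraic set, so
`exists_open_subset_image` applies to it. -/
theorem exists_open_subset_sumsOf {n : ℕ} {X : Set (Fin n → ℝ)} (hX : IsZClosed X) {r : ℕ}
    (h : SumsDense X r) : ∃ V : Set (Fin n → ℝ), IsOpen V ∧ V.Nonempty ∧ V ⊆ sumsOf X r := by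
  obtain ⟨I, rfl⟩ := hX
  let Y : Set (Fin r × Fin n → ℝ) := {y | ∀ i, (fun k => y (i, k)) ∈ zLocus I}
  have hren : ∀ (y : Fin r × Fin n → ℝ) (i : Fin r) (p : MvPolynomial (Fin n) ℝ),
      eval y (rename (Prod.mk i) p) = eval (fun k => y (i, k)) p := fun y i p => by
    rw [eval_rename]; rfl
  have hY : IsZClosed Y := by
    refine ⟨{p | ∃ i, ∃ p' ∈ I, p = rename (Prod.mk i) p'}, ?_⟩
    ext y
    constructor
    · rintro hy _ ⟨i, p, hp, rfl⟩
      rw [hren]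
      exact hy i p hp
    · intro hy i p hp
      rw [← hren]
      exact hy _ ⟨i, p, hp, rfl⟩
  have hsum : ∀ (y : Fin r × Fin n → ℝ) (k : Fin n),
      eval y (∑ i : Fin r, X (i, k) : MvPolynomial (Fin r × Fin n) ℝ) = ∑ i, y (i, k) := by
    intro y k
    simp [map_sum]
  obtain ⟨V, hVo, hVne, hV⟩ := exists_open_subset_image Y hY
    (fun k => ∑ i : Fin r, MvPolynomial.X (i, k)) (by
      intro g hg
      refine h g ?_
      rintro v ⟨f, hf, rfl⟩
      have := hg (fun ik => f ik.1 ik.2) (fun i => hf i)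
      simp only [hsum] at this
      convert this using 2
      congr 1
      funext k
      simp)
  refine ⟨V, hVo, hVne, fun w hw => ?_⟩
  obtain ⟨y, hy, hyw⟩ := hV w hw
  refine ⟨fun i k => y (i, k), hy, ?_⟩
  funext k
  rw [← hyw k, hsum]
  simp

theorem eval_aeval_X_add_C {F σ : Type*} [CommRing F] (z w : σ → F) (G : MvPolynomial σ F) :
    eval z (aeval (fun k => X k + C (w k)) G : MvPolynomial σ F) = eval (z + w) G := by
  induction G using MvPolynomial.induction_on with
  | C a => simp
  | add p q hp hq => simp only [map_add, hp, hq]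
  | mul_X p k hp => simp only [map_mul, hp, aeval_X, map_add, eval_X, eval_C, Pi.add_apply]

/-- Zariski density of the real points of the cone passes to sums: in a sum of complex points the
summands are replaced by real ones one at a time. -/
theorem sumsDense_real_of_complex {n : ℕ} {XR : Set (Fin n → ℝ)} {XC : Set (Fin n → ℂ)}
    (hdense : ∀ C : Set (Fin n → ℂ), IsZClosed C →
      (fun x : Fin n → ℝ => fun i => (x i : ℂ)) '' XR ⊆ C → XC ⊆ C)
    {r : ℕ} (h : SumsDense XC r) : SumsDense XR r := by
  classical
  intro g hg
  set G := MvPolynomial.map (algebraMap ℝ ℂ) g with hGdef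
  suffices hG : G = 0 by
    exact MvPolynomial.map_injective _ (algebraMap ℝ ℂ).injective (by rw [← hGdef, hG, map_zero])
  have key : ∀ T : Finset (Fin r), ∀ f : Fin r → Fin n → ℂ, (∀ i ∈ T, f i ∈ XC) →
      (∀ i ∉ T, f i ∈ (fun x : Fin n → ℝ => fun i => (x i : ℂ)) '' XR) →
      eval (∑ i, f i) G = 0 := by
    intro T
    induction T using Finset.induction_on with
    | empty =>
      intro f _ hf
      choose x hx hxf using fun i => hf i (Finset.notMem_empty i)
      have h1 := hg (∑ i, x i) ⟨x, hx, rfl⟩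
      have h2 : ∑ i, f i = algebraMap ℝ ℂ ∘ (∑ i, x i) := by
        funext k
        simp [← hxf]
      rw [h2, hGdef, eval_map, ← eval₂_comp, h1, map_zero]
    | insert i T hiT ih =>
      intro f hfT hf
      -- the condition on the `i`-th summand alone, the others being fixed, is Zariski closed
      let C : Set (Fin n → ℂ) := {z | eval (∑ i', Function.update f i z i') G = 0}
      have hC : IsZClosed C := by
        refine ⟨{aeval (fun k => X k + MvPolynomial.C ((∑ i' ∈ Finset.univ \ {i}, f i') k)) G}, ?_⟩
        ext z
        simp only [C, zLocus, Set.mem_ofPred_eq, Set.mem_singleton_iff, forall_eq]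
        rw [Finset.sum_update_of_mem (Finset.mem_univ i)]
        have : eval z (aeval (fun k => X k +
            MvPolynomial.C ((∑ i' ∈ Finset.univ \ {i}, f i') k)) G) =
            eval (z + ∑ i' ∈ Finset.univ \ {i}, f i') G := by
          exact eval_aeval_X_add_C z _ G
        rw [this]
      have hsub : XC ⊆ C := by
        refine hdense C hC fun z hz => ?_
        refine ih _ (fun i' hi' => ?_) fun i' hi' => ?_
        · rw [Function.update_of_ne (by rintro rfl; exact hiT hi')]
          exact hfT i' (Finset.mem_insert_of_mem hi')
        · by_cases hii : i' = i
          · subst hii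
            rwa [Function.update_self]
          · rw [Function.update_of_ne hii]
            exact hf i' (by simp [hii, hi'])
      have := hsub (hfT i (Finset.mem_insert_self i T))
      simpa only [C, Set.mem_ofPred_eq, Function.update_eq_self] using this
  refine h G ?_
  rintro v ⟨f, hf, rfl⟩
  exact key Finset.univ f (fun i _ => hf i) fun i hi => absurd (Finset.mem_univ i) hi

theorem isTypicalRank_of_minimal {n : ℕ} {X : Set (Fin (n + 1) → ℝ)} (hX : IsZClosed X) {k : ℕ}
    (hk : SumsDense X k) (hmin : ∀ l < k, ¬ SumsDense X l) : IsTypicalRank X k := by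
  obtain ⟨V, hVo, hVne, hV⟩ := exists_open_subset_sumsOf hX hk
  have hex : ∀ l : Fin k, ∃ g : MvPolynomial (Fin (n + 1)) ℝ,
      (∀ v ∈ sumsOf X l, eval v g = 0) ∧ g ≠ 0 := by
    intro l
    simpa [SumsDense] using hmin l l.2
  choose g hg hg0 using hex
  refine ⟨V ∩ {v | eval v (∏ l, g l) ≠ 0},
    hVo.inter (isOpen_ne_fun (MvPolynomial.continuous_eval _) continuous_const), ?_, ?_⟩
  · by_contra hemp
    refine (Finset.prod_ne_zero_iff.2 fun l _ => hg0 l) (eq_zero_of_forall_mem_open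
      (RingHom.id ℝ) hVo hVne (∏ l, g l) fun v hv => ?_)
    by_contra hne
    exact hemp ⟨v, hv, hne⟩
  · rintro v ⟨hvV, hv⟩
    refine le_antisymm (xRank_le_of_mem (hV hvV)) (le_sInf ?_)
    rintro _ ⟨s, rfl, hs⟩
    by_contra! hlt
    rw [Nat.cast_lt] at hlt
    refine hv ?_
    rw [map_prod]
    exact Finset.prod_eq_zero (Finset.mem_univ ⟨s, hlt⟩) (hg ⟨s, hlt⟩ v hs)

/-- Theorem 2 of the paper. For a real irreducible nondegenerate
projective variety with Zariski-dense real points, the minimum typical rank equals the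
generic rank of the complexification. -/
theorem stmt_1 {n : ℕ} (I : Set (MvPolynomial (Fin (n + 1)) ℝ))
    (XhatR : Set (Fin (n + 1) → ℝ)) (XhatC : Set (Fin (n + 1) → ℂ))
    (hXR : XhatR = zLocus I)
    (hXC : XhatC = zLocus (⇑(MvPolynomial.map (algebraMap ℝ ℂ)) '' I))
    (hcone : IsCone XhatR) (hirr : IsZIrreducible XhatR)
    (hnondeg : Submodule.span ℝ XhatR = ⊤)
    (hdense : ∀ C : Set (Fin (n + 1) → ℂ), IsZClosed C →
      (fun x : Fin (n + 1) → ℝ => fun i => (x i : ℂ)) '' XhatR ⊆ C → XhatC ⊆ C)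
    (r0 : ℕ) (hr0 : IsLeast {r : ℕ | IsTypicalRank XhatR r} r0)
    (rgen : ℕ)
    (hgen : ∃ U : Set (Fin (n + 1) → ℂ), IsZOpen U ∧ IsZDense U ∧
      ∀ v ∈ U, xRank XhatC v = (rgen : ℕ∞)) :
    r0 = rgen := by
  subst hXR
  have hemb : ∀ x ∈ zLocus I, (fun i => (x i : ℂ)) ∈ XhatC := by
    intro x hx
    rw [hXC]
    rintro _ ⟨p, hp, rfl⟩
    have h1 : (fun i => (x i : ℂ)) = algebraMap ℝ ℂ ∘ x := rfl
    rw [h1, eval_map, ← eval₂_comp, hx p hp, map_zero]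
  obtain ⟨W, hWo, hWd, hW⟩ := hgen
  refine le_antisymm ?_ ?_
  · have hC : SumsDense XhatC rgen := by
      intro g hg
      have huniv := hWd (zLocus {g}) ⟨{g}, rfl⟩ (by
        rintro v hv _ rfl
        exact hg v (mem_sumsOf_of_xRank_eq (hW v hv)))
      refine MvPolynomial.funext fun v => ?_
      have hv : v ∈ zLocus {g} := huniv ▸ Set.mem_univ v
      rw [hv g rfl, map_zero]
    have hR : SumsDense (zLocus I) rgen := sumsDense_real_of_complex hdense hC
    classical
    have hex : ∃ k, SumsDense (zLocus I) k := ⟨rgen, hR⟩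
    have htyp := isTypicalRank_of_minimal ⟨I, rfl⟩ (Nat.find_spec hex)
      fun l hl => Nat.find_min hex hl
    exact (hr0.2 htyp).trans (Nat.find_min' hex hR)
  · obtain ⟨U, hUo, hUne, hU⟩ := hr0.1
    obtain ⟨J, hJ⟩ := hWo
    -- the real open set `U` is Zariski dense in complex affine space, so it meets `W`
    obtain ⟨v, hvU, hvW⟩ : ∃ v ∈ U, (fun i => (v i : ℂ)) ∈ W := by
      by_contra! hcon
      have hJ0 : ∀ q ∈ J, q = 0 := fun q hq =>
        eq_zero_of_forall_mem_open (algebraMap ℝ ℂ) hUo hUne q fun v hv => by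
          have hmem : (fun i => (v i : ℂ)) ∈ Wᶜ := hcon v hv
          rw [hJ] at hmem
          exact hmem q hq
      have hWempty : W = ∅ := by
        rw [← Set.compl_univ_iff, hJ, Set.eq_univ_iff_forall]
        intro v q hq
        rw [hJ0 q hq, map_zero]
      have huniv := hWd (zLocus {1}) ⟨{1}, rfl⟩ (by simp [hWempty])
      have h0 : (0 : Fin (n + 1) → ℂ) ∈ zLocus {(1 : MvPolynomial (Fin (n + 1)) ℂ)} :=
        huniv ▸ Set.mem_univ _
      have h1 := h0 1 rfl
      rw [map_one] at h1
      exact one_ne_zero h1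
    obtain ⟨f, hf, hfv⟩ := mem_sumsOf_of_xRank_eq (hU v hvU)
    have hmem : (fun i => (v i : ℂ)) ∈ sumsOf XhatC r0 := by
      refine ⟨fun i k => (f i k : ℂ), fun i => hemb _ (hf i), ?_⟩
      funext k
      simp [← hfv]
    have hle := xRank_le_of_mem hmem
    rw [hW _ hvW, Nat.cast_le] at hle
    exact hle
end

section
/- Let 𝔽 be an infinite field and let U ⊆ 𝔽^{n+1} be a Zariski dense open subset. Then for every nonzero vector q ∈ 𝔽^{n+1} there exist two linearly independent points p, p′ ∈ U such that q is a linear combination of p and p′. Consequently, if every point of U has X-rank at most r with respect to a variety X, then every nonzero vector of 𝔽^{n+1} has X-rank at most 2r. -/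
/-!
Given `q ≠ 0`, density of `U` gives a point `u ∈ U` off the line spanned by `q`
(`exists_mem_linearIndependent`). Since `U` is open and `F` is infinite, the line `u + F q` meets
`U` in a second point `u + t q`, `t ≠ 0` (`exists_line_mem`). The two points are linearly
independent and `q = t⁻¹ ((u + t q) - u)`. The rank bound follows because being a sum of `r`
elements of a cone is stable under scaling, and numbers of summands add.
-/

open MvPolynomial

/-- A dense set is not contained in the hyperplane `qⱼ xᵢ = qᵢ xⱼ`, so it has points off the line
spanned by `q`. -/
lemma exists_mem_linearIndependent {F : Type*} [Field F] {n : ℕ} (hn : 1 ≤ n)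
    {U : Set (Fin (n + 1) → F)} (hU : IsZDense U) {q : Fin (n + 1) → F} (hq : q ≠ 0) :
    ∃ u ∈ U, LinearIndependent F ![q, u] := by
  obtain ⟨j, hj⟩ := Function.ne_iff.mp hq
  have : Nontrivial (Fin (n + 1)) := Fin.nontrivial_iff_two_le.mpr (by omega)
  obtain ⟨i, hij⟩ := exists_ne j
  let l : MvPolynomial (Fin (n + 1)) F := C (q j) * X i - C (q i) * X j
  have hl : ∃ u ∈ U, eval u l ≠ 0 := by
    by_contra! h
    have hC := hU (zLocus {l}) ⟨_, rfl⟩ (by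
      intro u hu p hp
      rw [Set.mem_singleton_iff.mp hp]
      exact h u hu)
    have h1 : Pi.single i 1 ∈ zLocus {l} := hC ▸ Set.mem_univ _
    have h2 := h1 l rfl
    simp [l, hij.symm] at h2
    exact hj h2
  obtain ⟨u, hu, hlu⟩ := hl
  refine ⟨u, hu, (LinearIndependent.pair_iff' hq).mpr fun a ha => hlu ?_⟩
  subst ha
  simp [l]
  ring

/-- Over an infinite field, one can move from a point `u` of an open set by a nonzero multiple of any
vector `q` without leaving the set: a polynomial separating `u` from the complement restricts to a nonzero polynomial in
one variable, which has finitely many roots. -/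
lemma exists_line_mem {F : Type*} [Field F] [Infinite F] {σ : Type*}
    {U : Set (σ → F)} (hU : IsZOpen U) {u : σ → F} (hu : u ∈ U) (q : σ → F) :
    ∃ t : F, t ≠ 0 ∧ u + t • q ∈ U := by
  obtain ⟨I, hI⟩ := hU
  have hmem : ∀ x, x ∈ U ↔ ∃ f ∈ I, eval x f ≠ 0 := fun x => by
    rw [← not_iff_not, ← Set.mem_compl_iff, hI]
    simp [zLocus]
  obtain ⟨f, hf, hfu⟩ := (hmem u).mp hu
  let g : Polynomial F := aeval (fun i => Polynomial.C (u i) + Polynomial.X * Polynomial.C (q i)) f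
  have hg : ∀ t, g.eval t = eval (u + t • q) f := fun t => by
    have h := MvPolynomial.map_aeval
      (fun i => Polynomial.C (u i) + Polynomial.X * Polynomial.C (q i)) (Polynomial.evalRingHom t) f
    rw [Polynomial.coe_evalRingHom] at h
    rw [h, MvPolynomial.eval]
    congr 1
    congr 1
    · ext a
      simp
    · funext i
      simp
      ring
  have hg0 : Polynomial.X * g ≠ 0 := by
    refine mul_ne_zero Polynomial.X_ne_zero fun h => hfu ?_
    simpa [h] using (hg 0).symm
  obtain ⟨t, ht⟩ : ∃ t, (Polynomial.X * g).eval t ≠ 0 := by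
    by_contra! h
    exact hg0 (Polynomial.funext (by simpa using h))
  rw [Polynomial.eval_mul, Polynomial.eval_X, hg] at ht
  exact ⟨t, left_ne_zero_of_mul ht, (hmem _).mpr ⟨f, hf, right_ne_zero_of_mul ht⟩⟩

lemma IsCone.smul_mem_sumsOf {F : Type*} [CommSemiring F] {σ : Type*} {S : Set (σ → F)}
    (hS : IsCone S) (c : F) {r : ℕ} {v : σ → F} (hv : v ∈ sumsOf S r) :
    c • v ∈ sumsOf S r := by
  obtain ⟨f, hf, rfl⟩ := hv
  exact ⟨fun i => c • f i, fun i => hS c _ (hf i), Finset.smul_sum.symm⟩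

lemma add_mem_sumsOf {F : Type*} [CommSemiring F] {σ : Type*} {S : Set (σ → F)}
    {r s : ℕ} {v w : σ → F} (hv : v ∈ sumsOf S r) (hw : w ∈ sumsOf S s) :
    v + w ∈ sumsOf S (r + s) := by
  obtain ⟨f, hf, rfl⟩ := hv
  obtain ⟨g, hg, rfl⟩ := hw
  refine ⟨Fin.append f g, fun i => ?_, by simp [Fin.sum_univ_add]⟩
  induction i using Fin.addCases with
  | left i => simpa using hf i
  | right i => simpa using hg i

/-- Over an infinite field, if `U ⊆ 𝔽^{n+1}` is a Zariski dense open
set, then every nonzero vector is a linear combination of two linearly independent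
points of `U`; consequently, if every point of `U` has `X`-rank at most `r`, then every
nonzero vector has `X`-rank at most `2r`. -/
theorem stmt_8 {F : Type*} [Field F] [Infinite F] {n : ℕ} (hn : 1 ≤ n)
    (U : Set (Fin (n + 1) → F)) (hUopen : IsZOpen U) (hUdense : IsZDense U) :
    (∀ q : Fin (n + 1) → F, q ≠ 0 →
      ∃ p p' : Fin (n + 1) → F, p ∈ U ∧ p' ∈ U ∧
        LinearIndependent F ![p, p'] ∧ q ∈ Submodule.span F {p, p'}) ∧
    (∀ Xhat : Set (Fin (n + 1) → F), IsCone Xhat →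
      ∀ r : ℕ, (∀ v ∈ U, ∃ s ≤ r, v ∈ sumsOf Xhat s) →
        ∀ q : Fin (n + 1) → F, q ≠ 0 → ∃ s ≤ 2 * r, q ∈ sumsOf Xhat s) := by
  have key : ∀ q : Fin (n + 1) → F, q ≠ 0 →
      ∃ p p' : Fin (n + 1) → F, p ∈ U ∧ p' ∈ U ∧
        LinearIndependent F ![p, p'] ∧ q ∈ Submodule.span F {p, p'} := by
    intro q hq
    obtain ⟨u, hu, hli⟩ := exists_mem_linearIndependent hn hUdense hq
    obtain ⟨t, ht, htU⟩ := exists_line_mem hUopen hu q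
    refine ⟨u, u + t • q, hu, htU, ?_, ?_⟩
    · rw [LinearIndependent.pair_iff] at hli ⊢
      intro a b hab
      obtain ⟨h1, h2⟩ := hli (b * t) (a + b) (by rw [← hab]; module)
      have hb : b = 0 := (mul_eq_zero.mp h1).resolve_right ht
      exact ⟨by simpa [hb] using h2, hb⟩
    · refine Submodule.mem_span_pair.mpr ⟨-t⁻¹, t⁻¹, ?_⟩
      rw [smul_add, smul_smul, inv_mul_cancel₀ ht]
      module
  refine ⟨key, fun Xhat hX r hr q hq => ?_⟩
  obtain ⟨p, p', hp, hp', -, hspan⟩ := key q hq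
  obtain ⟨a, b, rfl⟩ := Submodule.mem_span_pair.mp hspan
  obtain ⟨s, hs, hps⟩ := hr p hp
  obtain ⟨s', hs', hps'⟩ := hr p' hp'
  exact ⟨s + s', by omega,
    add_mem_sumsOf (hX.smul_mem_sumsOf a hps) (hX.smul_mem_sumsOf b hps')⟩
end

section
/- For n > 3, every nonzero tensor in ℂⁿ ⊗ ℂⁿ ⊗ ℂⁿ has tensor rank at most 2·⌈n³/(3n−2)⌉, and every nonzero real tensor in ℝⁿ ⊗ ℝⁿ ⊗ ℝⁿ has real tensor rank at most 2·⌈n³/(3n−2)⌉. For n = 3, the corresponding bound is 10 in both cases. -/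
/-!
The bound follows from a stronger elementary one, valid over `ℝ` and `ℂ` alike: every tensor in
`𝔽ⁿ ⊗ 𝔽ⁿ ⊗ 𝔽ⁿ` has rank at most `n + n⌈n/2⌉`. No knowledge of generic ranks is required.

View a tensor as `n` slices, each an `n × n` matrix, and group the slices into `⌈n/2⌉` pairs.
Fix a diagonal matrix `D` with distinct entries. Every pair `(B, C)` of matrices has the form
`B = P Q + diagonal`, `C = P D Q + diagonal` (`exists_pair_decomposition`). Indeed the map
`(P, Q, δ, δ') ↦ (P Q + diag δ, P D Q + diag δ')` has surjective derivative at `(1, 1, 0, 0)`,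
because the entries of `D` are distinct; hence its image contains a neighbourhood of `(1, D)`, in
particular `(1 + s B, D + s C)` for some `s ≠ 0`, and one divides by `s`.

The pair `(P Q, P D Q)` costs `n` rank-one terms (column `l` of `P` times row `l` of `Q`), and the
diagonal corrections of all slices together cost another `n` terms `e_l ⊗ e_l ⊗ w_l`. Finally
`n + n⌈n/2⌉ ≤ 2⌈n³/(3n-2)⌉` for `n > 3`, and `n + n⌈n/2⌉ = 9 ≤ 10` for `n = 3`.
-/

/-- The rank of a tensor `T` in a tensor product of modules: the least `r` such that `T`
is a sum of `r` decomposable (rank one) tensors (`⊤` if no such expression exists). -/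
noncomputable def tensorRank (R : Type*) [CommSemiring R] {ι : Type*}
    (V : ι → Type*) [∀ i, AddCommMonoid (V i)] [∀ i, Module R (V i)]
    (T : PiTensorProduct R V) : ℕ∞ :=
  sInf {r : ℕ∞ | ∃ s : ℕ, r = s ∧ ∃ v : Fin s → (Π i, V i),
    T = ∑ j, PiTensorProduct.tprod R (v j)}

/-- The bound for the maximum rank of tensors in `𝔽ⁿ ⊗ 𝔽ⁿ ⊗ 𝔽ⁿ`: `10` for `n = 3` and
`2⌈n³/(3n-2)⌉` for `n > 3`. -/
def tripleBound (n : ℕ) : ℕ :=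
  if n = 3 then 10 else 2 * ((n ^ 3 + (3 * n - 3)) / (3 * n - 2))

open Matrix Topology in
open scoped Matrix.Norms.Operator in
/-- Modulo diagonal matrices, any two square matrices are simultaneously of the form
`(P Q, P D Q)`, where `D` is a prescribed diagonal matrix with distinct entries. -/
theorem exists_pair_decomposition {𝕜 : Type*} [RCLike 𝕜] {n : ℕ} (d : Fin n → 𝕜)
    (hd : Function.Injective d) (B C : Matrix (Fin n) (Fin n) 𝕜) :
    ∃ (P Q : Matrix (Fin n) (Fin n) 𝕜) (δ δ' : Fin n → 𝕜),
      B = P * Q + diagonal δ ∧ C = P * diagonal d * Q + diagonal δ' := by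
  let M := Matrix (Fin n) (Fin n) 𝕜
  let E := (M × M) × ((Fin n → 𝕜) × (Fin n → 𝕜))
  let diagL : (Fin n → 𝕜) →L[𝕜] M :=
    LinearMap.toContinuousLinearMap (Matrix.diagonalLinearMap (Fin n) 𝕜 𝕜)
  let p₁ : E →L[𝕜] M := (ContinuousLinearMap.fst 𝕜 M M).comp (ContinuousLinearMap.fst 𝕜 _ _)
  let p₂ : E →L[𝕜] M := (ContinuousLinearMap.snd 𝕜 M M).comp (ContinuousLinearMap.fst 𝕜 _ _)
  let q₁ : E →L[𝕜] M :=
    diagL.comp ((ContinuousLinearMap.fst 𝕜 _ _).comp (ContinuousLinearMap.snd 𝕜 (M × M) _))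
  let q₂ : E →L[𝕜] M :=
    diagL.comp ((ContinuousLinearMap.snd 𝕜 _ _).comp (ContinuousLinearMap.snd 𝕜 (M × M) _))
  let D : M := diagonal d
  let G : E → M × M := fun x => (p₁ x * p₂ x + q₁ x, p₁ x * D * p₂ x + q₂ x)
  let x₀ : E := ((1, 1), (0, 0))
  have h₁ : HasStrictFDerivAt (fun x : E => p₁ x) p₁ x₀ := p₁.hasStrictFDerivAt
  have h₂ : HasStrictFDerivAt (fun x : E => p₂ x) p₂ x₀ := p₂.hasStrictFDerivAt
  have hG := ((h₁.mul' h₂).add q₁.hasStrictFDerivAt).prodMk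
    (((h₁.mul_const' D).mul' h₂).add q₂.hasStrictFDerivAt)
  have hsurj := @HasStrictFDerivAt.map_nhds_eq_of_surj 𝕜 _ E _ _ (M × M) _ _
    (FiniteDimensional.complete 𝕜 E) (FiniteDimensional.complete 𝕜 (M × M)) _ _ _ hG (by
    rw [LinearMap.range_eq_top]
    rintro ⟨U, W⟩
    -- Off the diagonal, solve `X + Y = U`, `X D + D Y = W` entrywise; the determinant of the
    -- `2 × 2` system at `(i, j)` is `d i - d j`.
    let X : M := Matrix.of fun i j => if i = j then 0 else (d i * U i j - W i j) / (d i - d j)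
    let Y : M := Matrix.of fun i j => if i = j then 0 else (W i j - d j * U i j) / (d i - d j)
    refine ⟨((X, Y), (fun i => U i i, fun i => W i i)), ?_⟩
    have hne : ∀ i j, i ≠ j → d i - d j ≠ 0 := fun i j h => sub_ne_zero.2 (hd.ne h)
    refine Prod.ext ?_ ?_
    · change (1 : M) * Y + X * 1 + diagonal (fun i => U i i) = U
      ext i j
      by_cases h : i = j
      · subst h; simp [X, Y]
      · have := hne i j h
        simp [X, Y, h]
        field_simp
        ring
    · change (1 * D) * Y + (X * D) * 1 + diagonal (fun i => W i i) = W
      ext i j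
      by_cases h : i = j
      · subst h
        rw [one_mul, mul_one, Matrix.add_apply, Matrix.add_apply, diagonal_mul, mul_diagonal]
        simp [X, Y]
      · have := hne i j h
        rw [one_mul, mul_one, Matrix.add_apply, Matrix.add_apply, diagonal_mul, mul_diagonal]
        simp [X, Y, h]
        field_simp
        ring)
  have hG₀ : G x₀ = (1, D) := by
    change ((1 : M) * 1 + diagonal 0, 1 * D * 1 + diagonal 0) = _
    simp
  have hrange : Set.range G ∈ 𝓝 ((1 : M), D) := by
    rw [← hG₀]
    have : 𝓝 (G x₀) = Filter.map G (𝓝 x₀) := hsurj.symm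
    rw [this]
    exact Filter.range_mem_map
  have hlim : Filter.Tendsto (fun s : 𝕜 => ((1 : M) + s • B, D + s • C)) (𝓝[≠] 0)
      (𝓝 ((1 : M), D)) := by
    have : Continuous (fun s : 𝕜 => ((1 : M) + s • B, D + s • C)) := by fun_prop
    have h := this.tendsto 0
    simp only [zero_smul, add_zero] at h
    exact h.mono_left nhdsWithin_le_nhds
  obtain ⟨s, ⟨x, hx⟩, hs⟩ := ((hlim.eventually hrange).and self_mem_nhdsWithin).exists
  have hs : s ≠ 0 := hs
  obtain ⟨⟨P, Q⟩, δ, δ'⟩ := x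
  have e₁ : P * Q + diagonal δ = 1 + s • B := congrArg Prod.fst hx
  have e₂ : P * D * Q + diagonal δ' = D + s • C := congrArg Prod.snd hx
  refine ⟨s⁻¹ • P, Q, s⁻¹ • (δ - 1), s⁻¹ • (δ' - d), ?_, ?_⟩
  · have : s • B = P * Q + diagonal (δ - 1) := by
      have h : diagonal (δ - 1) = diagonal δ - (1 : M) := by
        rw [← diagonal_one, diagonal_sub]; rfl
      rw [h, ← add_sub_assoc, e₁]; abel
    rw [diagonal_smul, smul_mul_assoc, ← smul_add, ← this, inv_smul_smul₀ hs]
  · have : s • C = P * D * Q + diagonal (δ' - d) := by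
      have h : diagonal (δ' - d) = diagonal δ' - D := by
        rw [diagonal_sub]; rfl
      rw [h, ← add_sub_assoc, e₂]; abel
    rw [diagonal_smul, smul_mul_assoc, smul_mul_assoc, ← smul_add, ← this, inv_smul_smul₀ hs]

/-- A coordinatewise decomposition indexed by a finite type bounds the rank by its cardinality. -/
theorem tensorRank_le_card {𝕜 : Type*} [Field 𝕜] {n : ℕ} {σ : Type*} [Fintype σ]
    (T : PiTensorProduct 𝕜 (fun _ : Fin 3 => Fin n → 𝕜)) (v : σ → Fin 3 → Fin n → 𝕜)
    (h : ∀ p : Fin 3 → Fin n,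
      (Basis.piTensorProduct (fun _ : Fin 3 => Pi.basisFun 𝕜 (Fin n))).repr T p =
        ∑ x, ∏ i, v x i (p i)) :
    tensorRank 𝕜 (fun _ : Fin 3 => Fin n → 𝕜) T ≤ (Fintype.card σ : ℕ∞) := by
  refine sInf_le ⟨Fintype.card σ, rfl, fun j => v ((Fintype.equivFin σ).symm j), ?_⟩
  rw [Equiv.sum_comp (Fintype.equivFin σ).symm (fun x => PiTensorProduct.tprod 𝕜 (v x))]
  refine (Basis.piTensorProduct (fun _ : Fin 3 => Pi.basisFun 𝕜 (Fin n))).ext_elem fun p => ?_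
  rw [h p, map_sum, Finsupp.finsetSum_apply]
  simp [Basis.piTensorProduct_repr_tprod_apply]

theorem add_mul_half_le_tripleBound (n : ℕ) (hn : 3 ≤ n) :
    n + n * ((n + 1) / 2) ≤ tripleBound n := by
  unfold tripleBound
  split_ifs with h
  · subst h; norm_num
  · by_cases h5 : n = 5
    · subst h5; norm_num
    obtain ⟨m, rfl⟩ : ∃ m, n = m + 4 := ⟨n - 4, by omega⟩
    have e : 3 * (m + 4) - 3 = 3 * m + 9 := by omega
    have e' : 3 * (m + 4) - 2 = 3 * m + 10 := by omega
    rw [e, e']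
    set N := ((m + 4) ^ 3 + (3 * m + 9)) / (3 * m + 10) with hN
    have hceil : (m + 4) ^ 3 ≤ (3 * m + 10) * N := by
      have := Nat.lt_mul_div_succ ((m + 4) ^ 3 + (3 * m + 9)) (b := 3 * m + 10) (by omega)
      rw [← hN] at this
      nlinarith
    refine le_of_mul_le_mul_left ?_ (show 0 < 3 * m + 10 by omega)
    rcases Nat.even_or_odd' m with ⟨k, rfl | rfl⟩
    · have : (2 * k + 4 + 1) / 2 = k + 2 := by omega
      rw [this]
      have key : (3 * (2 * k) + 10) * (2 * k + 4 + (2 * k + 4) * (k + 2)) ≤ 2 * (2 * k + 4) ^ 3 := by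
        nlinarith [Nat.zero_le (k ^ 3), Nat.zero_le (k ^ 2)]
      linarith
    · have : (2 * k + 1 + 4 + 1) / 2 = k + 3 := by omega
      rw [this]
      obtain ⟨l, rfl⟩ : ∃ l, k = l + 1 := ⟨k - 1, by omega⟩
      have key : (3 * (2 * (l + 1) + 1) + 10) *
          (2 * (l + 1) + 1 + 4 + (2 * (l + 1) + 1 + 4) * (l + 1 + 3)) ≤
          2 * (2 * (l + 1) + 1 + 4) ^ 3 := by
        nlinarith [Nat.zero_le (l ^ 3), Nat.zero_le (l ^ 2)]
      linarith

theorem tensorRank_le {𝕜 : Type*} [RCLike 𝕜] (n : ℕ) (hn : 3 ≤ n)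
    (T : PiTensorProduct 𝕜 (fun _ : Fin 3 => Fin n → 𝕜)) :
    tensorRank 𝕜 (fun _ : Fin 3 => Fin n → 𝕜) T ≤ (tripleBound n : ℕ∞) := by
  let t := (Basis.piTensorProduct (fun _ : Fin 3 => Pi.basisFun 𝕜 (Fin n))).repr T
  -- The `k`-th slice, extended by zero so that for odd `n` the last slice also has a partner.
  let A : ℕ → Matrix (Fin n) (Fin n) 𝕜 := fun k =>
    if hk : k < n then Matrix.of fun i j => t ![i, j, ⟨k, hk⟩] else 0
  let d : Fin n → 𝕜 := fun l => ((l : ℕ) : 𝕜)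
  have hd : Function.Injective d := fun a b h => Fin.ext (Nat.cast_injective h)
  choose P Q δ δ' hB hC using fun q : ℕ =>
    exists_pair_decomposition d hd (A (2 * q)) (A (2 * q + 1))
  -- `d l ^ (k % 2)` treats the two members of a pair uniformly.
  have hA : ∀ k, ∃ ε : Fin n → 𝕜, ∀ i j, A k i j =
      (∑ l, P (k / 2) i l * Q (k / 2) l j * d l ^ (k % 2)) + if i = j then ε i else 0 := by
    intro k
    rcases Nat.even_or_odd' k with ⟨q, rfl | rfl⟩
    · refine ⟨δ q, fun i j => ?_⟩
      have h1 : 2 * q / 2 = q := by omega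
      have h2 : 2 * q % 2 = 0 := by omega
      rw [h1, h2, hB q]
      simp [Matrix.mul_apply, Matrix.diagonal_apply]
    · refine ⟨δ' q, fun i j => ?_⟩
      have h1 : (2 * q + 1) / 2 = q := by omega
      have h2 : (2 * q + 1) % 2 = 1 := by omega
      rw [h1, h2, hC q]
      simp [Matrix.mul_apply, Matrix.diagonal_apply, mul_right_comm]
  choose ε hε using hA
  -- Terms `inl l` carry the diagonal corrections, terms `inr (q, l)` the `q`-th pair of slices.
  let v : Fin n ⊕ (Fin ((n + 1) / 2) × Fin n) → Fin 3 → Fin n → 𝕜 := Sum.elim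
    (fun l => ![Pi.single l 1, Pi.single l 1, fun k => ε k l])
    (fun x => ![fun i => P x.1 i x.2, fun j => Q x.1 x.2 j,
      fun k => if (k : ℕ) / 2 = x.1 then d x.2 ^ ((k : ℕ) % 2) else 0])
  refine (tensorRank_le_card T v fun p => ?_).trans ?_
  · have hp : p = ![p 0, p 1, p 2] := by
      ext i; fin_cases i <;> rfl
    have ht : t p = A (p 2) (p 0) (p 1) := by
      simp only [A, (p 2).isLt, dif_pos, Matrix.of_apply, Fin.eta]
      rw [← hp]
    change t p = _
    rw [ht, hε, Fintype.sum_sum_type, Fintype.sum_prod_type, add_comm]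
    congr 1
    · simp only [v, Fin.prod_univ_three, Sum.elim_inl]
      rw [Finset.sum_eq_single (p 0)]
      · simp [Pi.single_apply, eq_comm]
      · intro l _ hl
        simp [Pi.single_apply, hl.symm]
      · simp
    · rw [Finset.sum_eq_single (⟨(p 2 : ℕ) / 2, by omega⟩ : Fin ((n + 1) / 2))]
      · simp [v, Fin.prod_univ_three]
      · intro q _ hq
        have : (p 2 : ℕ) / 2 ≠ q := fun h => hq (Fin.ext h.symm)
        simp [v, Fin.prod_univ_three, this]
      · simp
  · have := add_mul_half_le_tripleBound n hn
    rw [Fintype.card_sum, Fintype.card_prod, Fintype.card_fin, Fintype.card_fin, mul_comm]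
    exact_mod_cast this

/-- For `n > 3` every nonzero tensor in `ℂⁿ ⊗ ℂⁿ ⊗ ℂⁿ` (resp.
`ℝⁿ ⊗ ℝⁿ ⊗ ℝⁿ`) has rank at most `2⌈n³/(3n-2)⌉`; for `n = 3` the bound is `10`. -/
theorem stmt_11 (n : ℕ) (hn : 3 ≤ n) :
    (∀ T : PiTensorProduct ℂ (fun _ : Fin 3 => Fin n → ℂ), T ≠ 0 →
      tensorRank ℂ (fun _ : Fin 3 => Fin n → ℂ) T ≤ (tripleBound n : ℕ∞)) ∧
    (∀ T : PiTensorProduct ℝ (fun _ : Fin 3 => Fin n → ℝ), T ≠ 0 →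
      tensorRank ℝ (fun _ : Fin 3 => Fin n → ℝ) T ≤ (tripleBound n : ℕ∞)) := by
  constructor
  · exact fun T _ => tensorRank_le n hn T
  · exact fun T _ => tensorRank_le n hn T
end
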